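/- Let k_1, ..., k_t be positive integers with Σ_{i=1}^t k_i = 2K, K ≥ 1. Consider candidates C = {a_1, p, b_1, b_2, b_3}, the axis a_1 L p L b_1 L b_2 L b_3, and the scoring vector ⟨4,3,2,0,0⟩ with the min scoring-rule extension. The nonmanipulators are one voter of weight 24K voting a_1 > p > b_1 > b_2 > b_3 and one voter of weight 9K voting b_1 > b_2 > b_3 > p > a_1. The manipulators have weights 4k_1, ..., 4k_t. Then there exist weak-order votes for the manipulators, each single-peaked with respect to the axis, such that p is a winner (no candidate has strictly greater total weighted score under ⟨4,3,2,0,0⟩ with the min extension) if and only if there exists a subset I ⊆ {1,...,t} with Σ_{i∈I} k_i = K. -/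

import Mathlib

open scoped Classical

section Defs

variable {C : Type*}

/-- Strict preference: `a` is strictly preferred to `b` in the vote `v`. -/
def SPref (v : C → C → Prop) (a b : C) : Prop := v a b ∧ ¬ v b a

/-- Indifference (a tie) between `a` and `b` in the vote `v`. -/
def Indiff (v : C → C → Prop) (a b : C) : Prop := v a b ∧ v b a

/-- A weak order: a complete (hence reflexive) and transitive binary relation. -/
def IsWeakOrder (v : C → C → Prop) : Prop := (∀ a b, v a b ∨ v b a) ∧ Transitive v

/-- A total (linear) order: an antisymmetric weak order. -/
def IsTotalOrderRel (v : C → C → Prop) : Prop :=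
  IsWeakOrder v ∧ ∀ a b, v a b → v b a → a = b

/-- A top order: a weak order all of whose ties are within the least-preferred
indifference class. -/
def IsTopOrder (v : C → C → Prop) : Prop :=
  IsWeakOrder v ∧ ∀ a b, a ≠ b → Indiff v a b → ∀ c, v c a

/-- `c` is among the most preferred candidates of `v`. -/
def TopCand (v : C → C → Prop) (c : C) : Prop := ∀ d, v c d

/-- `v` is single-peaked w.r.t. the axis `A`: there is a peak `p` (which is then the
unique most preferred candidate) such that `v` is strictly increasing along the part of
the axis up to `p` and strictly decreasing along the part of the axis after `p`. -/
def IsSinglePeaked (A : LinearOrder C) (v : C → C → Prop) : Prop :=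
  ∃ p : C, (∀ a b, A.lt a b → A.le b p → SPref v b a) ∧
           (∀ a b, A.le p a → A.lt a b → SPref v a b)

/-- `v` is single-plateaued w.r.t. the axis `A`: the axis splits into segments `X,Y,Z`
where the interval `Y = [y₁, y₂]` consists exactly of the most preferred candidates,
`v` is strictly increasing along `X` and strictly decreasing along `Z`. -/
def IsSinglePlateaued (A : LinearOrder C) (v : C → C → Prop) : Prop :=
  ∃ y₁ y₂ : C, A.le y₁ y₂ ∧ (∀ c, (A.le y₁ c ∧ A.le c y₂) ↔ TopCand v c) ∧
    (∀ a b, A.lt a b → A.le b y₁ → SPref v b a) ∧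
    (∀ a b, A.le y₂ a → A.lt a b → SPref v a b)

/-- `v` is possibly single-peaked w.r.t. the axis `A`: `v` is weakly increasing along
the axis up to some point `p` and weakly decreasing afterwards (so the most preferred
candidates form an interval `Y` around `p`). -/
def IsPossiblySinglePeaked (A : LinearOrder C) (v : C → C → Prop) : Prop :=
  ∃ p : C, (∀ a b, A.lt a b → A.le b p → v b a) ∧
           (∀ a b, A.le p a → A.lt a b → v a b)

/-- `v` is single-peaked with outside options w.r.t. the axis `A`: the axis splits into
segments `O₁,X,Y,Z,O₂` where the inner interval `[l,r]` (split into `X`, the peak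
`Y = {p}`, and `Z`) is single-peaked, every inner candidate is strictly preferred to
every outside candidate, and all outside candidates are mutually indifferent. -/
def IsSPOutsideOptions (A : LinearOrder C) (v : C → C → Prop) : Prop :=
  ∃ l p r : C, A.le l p ∧ A.le p r ∧
    (∀ a b, A.le l a → A.lt a b → A.le b p → SPref v b a) ∧
    (∀ a b, A.le p a → A.lt a b → A.le b r → SPref v a b) ∧
    (∀ a b, A.le l a → A.le a r → ¬ (A.le l b ∧ A.le b r) → SPref v a b) ∧
    (∀ a b, ¬ (A.le l a ∧ A.le a r) → ¬ (A.le l b ∧ A.le b r) → Indiff v a b)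

/-- The number of candidates strictly preferred to `c` (the `k_i` of `c`'s class). -/
noncomputable def aboveCount [Fintype C] (v : C → C → Prop) (c : C) : ℕ :=
  Nat.card {d : C // SPref v d c}

/-- The size of `c`'s indifference class (including `c` itself). -/
noncomputable def tiedCount [Fintype C] (v : C → C → Prop) (c : C) : ℕ :=
  Nat.card {d : C // Indiff v d c}

/-- The number of indifference classes strictly below `c`'s class. -/
noncomputable def classesBelow [Fintype C] (v : C → C → Prop) (c : C) : ℕ :=
  Set.ncard ((fun d => aboveCount v d) '' {d : C | SPref v c d})

/-- An `m`-candidate scoring vector, indexed by positions `1..m`: `α 1 ≥ α 2 ≥ ... ≥ α m`. -/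
def IsScoringVec (m : ℕ) (α : ℕ → ℕ) : Prop :=
  ∀ i j, 1 ≤ i → i ≤ j → j ≤ m → α j ≤ α i

/-- The four scoring-rule extensions: min, max, round down, and average. -/
inductive ScoreExt : Type
  | emin | emax | eroundDown | eaverage

/-- The score of candidate `c` in a weak-order vote `v` under the scoring vector `α`
(for `m` candidates) with scoring-rule extension `E`: writing the vote as indifference
classes `G₁ > ... > G_r` and `k_i = |G₁| + ... + |G_{i-1}|`, a candidate in `G_i` scores
`α (k_i + |G_i|)` under min, `α (k_i + 1)` under max, `α (m - r + i)` under round down,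
and `(α (k_i + 1) + ... + α (k_i + |G_i|)) / |G_i|` under average. -/
noncomputable def extScore [Fintype C] (m : ℕ) (α : ℕ → ℕ) (E : ScoreExt)
    (v : C → C → Prop) (c : C) : ℚ :=
  match E with
  | .emin => α (aboveCount v c + tiedCount v c)
  | .emax => α (aboveCount v c + 1)
  | .eroundDown => α (m - classesBelow v c)
  | .eaverage =>
      (∑ j ∈ Finset.Icc (aboveCount v c + 1) (aboveCount v c + tiedCount v c), (α j : ℚ))
        / (tiedCount v c : ℚ)

/-- The total weighted score of candidate `c` for a weighted profile `S`
(a list of weight/vote pairs). -/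
noncomputable def profScore [Fintype C] (m : ℕ) (α : ℕ → ℕ) (E : ScoreExt)
    (S : List (ℕ × (C → C → Prop))) (c : C) : ℚ :=
  (S.map (fun wv => (wv.1 : ℚ) * extScore m α E wv.2 c)).sum

/-- The total weight of the voters in `S` strictly preferring `a` to `b`. -/
noncomputable def prefWeight (S : List (ℕ × (C → C → Prop))) (a b : C) : ℕ :=
  (S.map (fun wv => if SPref wv.2 a b then wv.1 else 0)).sum

end Defs

/-- The scoring vector `⟨4,3,2,0,0⟩`, indexed by positions `1,...,5`. -/
def scvec : ℕ → ℕ := fun i => [0, 4, 3, 2, 0, 0].getD i 0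

/-- The candidates: `a₁` is `0`, `p` is `1`, `b₁` is `2`, `b₂` is `3`, `b₃` is `4`;
the axis is the natural order `a₁ L p L b₁ L b₂ L b₃` on `Fin 5`.
The vote `a₁ > p > b₁ > b₂ > b₃`. -/
def voteA : Fin 5 → Fin 5 → Prop := fun x y => x ≤ y

/-- The vote `b₁ > b₂ > b₃ > p > a₁` (given via its rank function). -/
def voteB : Fin 5 → Fin 5 → Prop := fun x y => (![4, 3, 0, 1, 2] x : ℕ) ≤ ![4, 3, 0, 1, 2] y

/-- Under the min extension a candidate scores the entry of the scoring vector at the number of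
candidates weakly preferred to it. -/
lemma extScore_emin {C : Type*} [Fintype C] (m : ℕ) (α : ℕ → ℕ) (v : C → C → Prop) (c : C) :
    extScore m α ScoreExt.emin v c = (α (∑ d, if v d c then 1 else 0) : ℚ) := by
  have h : aboveCount v c + tiedCount v c = ∑ d, if v d c then 1 else 0 := by
    simp only [aboveCount, tiedCount, Nat.card_eq_fintype_card, Fintype.card_subtype,
      Finset.card_filter]
    rw [← Finset.sum_add_distrib]
    refine Finset.sum_congr rfl fun d _ => ?_
    by_cases h₁ : v d c <;> by_cases h₂ : v c d <;> simp [SPref, Indiff, h₁, h₂]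
  simp only [extScore, h]

/-- The score of `c` in the vote `v` under `⟨4,3,2,0,0⟩` with the min extension, as a natural
number. -/
noncomputable def minScore (v : Fin 5 → Fin 5 → Prop) (c : Fin 5) : ℕ :=
  scvec (∑ d, if v d c then 1 else 0)

/-- The linear inequality between the scores of `a₁`, `p` and `b₁` that is tight exactly for the
useful manipulator votes. -/
lemma minScore_of_singlePeaked {v : Fin 5 → Fin 5 → Prop} (hv : IsWeakOrder v)
    (hs : IsSinglePeaked (inferInstance : LinearOrder (Fin 5)) v) :
    3 * minScore v 1 ≤ minScore v 0 + 2 * minScore v 2 + 6 ∧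
      (3 * minScore v 1 = minScore v 0 + 2 * minScore v 2 + 6 →
        minScore v 1 = minScore v 2 + 1 ∨ minScore v 1 = minScore v 2 + 2) := by
  obtain ⟨hc, ht⟩ := hv
  obtain ⟨p, hl, hr⟩ := hs
  have hrefl : ∀ a, v a a := fun a => (hc a a).elim id id
  have hl' : ∀ a b : Fin 5, a < b → b ≤ p → v b a ∧ ¬ v a b := hl
  have hr' : ∀ a b : Fin 5, p ≤ a → a < b → v a b ∧ ¬ v b a := hr
  have h302 : v 3 0 → v 0 2 → v 3 2 := fun h h' => ht h h'
  have h402 : v 4 0 → v 0 2 → v 4 2 := fun h h' => ht h h'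
  have h02 := hc 0 2
  simp only [minScore, Fin.sum_univ_five, hrefl, if_true]
  fin_cases p
  · have h01 := hr' 0 1 (by decide) (by decide)
    have h02 := hr' 0 2 (by decide) (by decide)
    have h03 := hr' 0 3 (by decide) (by decide)
    have h04 := hr' 0 4 (by decide) (by decide)
    have h12 := hr' 1 2 (by decide) (by decide)
    have h13 := hr' 1 3 (by decide) (by decide)
    have h14 := hr' 1 4 (by decide) (by decide)
    simp [h01, h02, h03, h04, h12, h13, h14, scvec]
    omega
  · have h01 := hl' 0 1 (by decide) (by decide)
    have h12 := hr' 1 2 (by decide) (by decide)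
    have h13 := hr' 1 3 (by decide) (by decide)
    have h14 := hr' 1 4 (by decide) (by decide)
    have h23 := hr' 2 3 (by decide) (by decide)
    have h24 := hr' 2 4 (by decide) (by decide)
    by_cases v 0 2 <;> by_cases v 2 0 <;> by_cases v 3 0 <;> by_cases v 4 0 <;>
      simp_all [scvec]
  · have h01 := hl' 0 1 (by decide) (by decide)
    have h02 := hl' 0 2 (by decide) (by decide)
    have h12 := hl' 1 2 (by decide) (by decide)
    have h23 := hr' 2 3 (by decide) (by decide)
    have h24 := hr' 2 4 (by decide) (by decide)
    by_cases v 3 1 <;> by_cases v 4 1 <;> simp [*, scvec]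
  · have h01 := hl' 0 1 (by decide) (by decide)
    have h02 := hl' 0 2 (by decide) (by decide)
    have h12 := hl' 1 2 (by decide) (by decide)
    have h13 := hl' 1 3 (by decide) (by decide)
    have h23 := hl' 2 3 (by decide) (by decide)
    by_cases v 4 2 <;> by_cases v 4 1 <;> simp [*, scvec]
  · have h01 := hl' 0 1 (by decide) (by decide)
    have h02 := hl' 0 2 (by decide) (by decide)
    have h12 := hl' 1 2 (by decide) (by decide)
    have h13 := hl' 1 3 (by decide) (by decide)
    have h14 := hl' 1 4 (by decide) (by decide)
    have h23 := hl' 2 3 (by decide) (by decide)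
    have h24 := hl' 2 4 (by decide) (by decide)
    simp [h01, h02, h12, h13, h14, h23, h24, scvec]

lemma minScore_voteA (c : Fin 5) : minScore voteA c = ![4, 3, 2, 0, 0] c := by
  simp only [minScore, voteA, Fin.sum_univ_five]
  fin_cases c <;> simp [scvec]

lemma minScore_voteB (c : Fin 5) : minScore voteB c = ![0, 0, 4, 3, 2] c := by
  simp only [minScore, voteB, Fin.sum_univ_five]
  fin_cases c <;> simp [scvec]

/-- The vote `p > b₁ > b₂ > b₃ > a₁`. -/
def voteStrict : Fin 5 → Fin 5 → Prop :=
  fun x y => (![4, 0, 1, 2, 3] x : ℕ) ≤ ![4, 0, 1, 2, 3] y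

/-- The vote `p > a₁ ~ b₁ > b₂ > b₃`. -/
def voteTied : Fin 5 → Fin 5 → Prop :=
  fun x y => (![1, 0, 1, 2, 3] x : ℕ) ≤ ![1, 0, 1, 2, 3] y

lemma minScore_voteStrict (c : Fin 5) : minScore voteStrict c = ![0, 4, 3, 2, 0] c := by
  simp only [minScore, voteStrict, Fin.sum_univ_five]
  fin_cases c <;> simp [scvec]

lemma minScore_voteTied (c : Fin 5) : minScore voteTied c = ![2, 4, 2, 0, 0] c := by
  simp only [minScore, voteTied, Fin.sum_univ_five]
  fin_cases c <;> simp [scvec]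

lemma isWeakOrder_rank {C : Type*} (f : C → ℕ) : IsWeakOrder fun x y => f x ≤ f y :=
  ⟨fun a b => le_total (f a) (f b), fun _ _ _ => le_trans⟩

lemma isSinglePeaked_voteStrict :
    IsSinglePeaked (inferInstance : LinearOrder (Fin 5)) voteStrict := by
  refine ⟨1, ?_, ?_⟩
  · change ∀ a b : Fin 5, a < b → b ≤ 1 → _ ≤ _ ∧ ¬ _ ≤ _
    decide
  · change ∀ a b : Fin 5, 1 ≤ a → a < b → _ ≤ _ ∧ ¬ _ ≤ _
    decide

lemma isSinglePeaked_voteTied :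
    IsSinglePeaked (inferInstance : LinearOrder (Fin 5)) voteTied := by
  refine ⟨1, ?_, ?_⟩
  · change ∀ a b : Fin 5, a < b → b ≤ 1 → _ ≤ _ ∧ ¬ _ ≤ _
    decide
  · change ∀ a b : Fin 5, 1 ≤ a → a < b → _ ≤ _ ∧ ¬ _ ≤ _
    decide

/-- The total scores in the profile of the reduction. -/
lemma profScore_reduction (t : ℕ) (ks : Fin t → ℕ) (K : ℕ) (tv : Fin t → Fin 5 → Fin 5 → Prop)
    (d : Fin 5) :
    profScore 5 scvec ScoreExt.emin
        ([(24 * K, voteA), (9 * K, voteB)] ++ List.ofFn (fun i => (4 * ks i, tv i))) d =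
      ((24 * K * ![4, 3, 2, 0, 0] d + 9 * K * ![0, 0, 4, 3, 2] d +
        4 * ∑ i, ks i * minScore (tv i) d : ℕ) : ℚ) := by
  have h : ∀ v : Fin 5 → Fin 5 → Prop,
      extScore 5 scvec ScoreExt.emin v d = (minScore v d : ℚ) :=
    fun v => extScore_emin 5 scvec v d
  rw [← minScore_voteA, ← minScore_voteB]
  simp only [profScore, List.map_append, List.sum_append, List.map_cons, List.map_nil,
    List.sum_cons, List.sum_nil, List.map_ofFn, List.sum_ofFn, Function.comp_def, h]
  push_cast
  rw [Finset.mul_sum]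
  simp only [mul_assoc, add_zero]

/-- With the min scoring-rule extension, nonmanipulators of weight `24K`
voting `a₁ > p > b₁ > b₂ > b₃` and of weight `9K` voting `b₁ > b₂ > b₃ > p > a₁`, and
manipulators of weights `4k₁, ..., 4kₜ` (where `k₁ + ... + kₜ = 2K`, `K ≥ 1`, each
`kᵢ > 0`), the manipulators can cast weak-order votes, single-peaked w.r.t. the axis
`a₁ L p L b₁ L b₂ L b₃`, that make `p` a winner under `⟨4,3,2,0,0⟩` with the min
extension iff some subcollection of the `kᵢ` sums to `K`. -/
theorem manipulation_43200_min_extension_iff_partition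
    (t : ℕ) (ks : Fin t → ℕ) (hks : ∀ i, 0 < ks i) (K : ℕ) (hK : 1 ≤ K)
    (hsum : ∑ i, ks i = 2 * K) :
    (∃ tv : Fin t → (Fin 5 → Fin 5 → Prop),
      (∀ i, IsWeakOrder (tv i) ∧
        IsSinglePeaked (inferInstance : LinearOrder (Fin 5)) (tv i)) ∧
      (∀ d : Fin 5,
        profScore 5 scvec ScoreExt.emin
            ([(24 * K, voteA), (9 * K, voteB)] ++ List.ofFn (fun i => (4 * ks i, tv i))) d ≤
          profScore 5 scvec ScoreExt.emin
            ([(24 * K, voteA), (9 * K, voteB)] ++ List.ofFn (fun i => (4 * ks i, tv i)))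
            (1 : Fin 5))) ↔
    (∃ I : Finset (Fin t), ∑ i ∈ I, ks i = K) := by
  simp only [profScore_reduction, Nat.cast_le]
  constructor
  · rintro ⟨tv, htv, hwin⟩
    have ha := hwin 0
    have hb := hwin 2
    simp only [Fin.isValue, Matrix.cons_val] at ha hb
    set S : Fin 5 → ℕ := fun c => ∑ i, ks i * minScore (tv i) c with hS
    have hpt : ∀ i ∈ Finset.univ, ks i * (3 * minScore (tv i) 1) ≤
        ks i * (minScore (tv i) 0 + 2 * minScore (tv i) 2 + 6) := fun i _ =>
      Nat.mul_le_mul_left _ (minScore_of_singlePeaked (htv i).1 (htv i).2).1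
    have hL : ∑ i, ks i * (3 * minScore (tv i) 1) = 3 * S 1 := by
      rw [hS, Finset.mul_sum]
      exact Finset.sum_congr rfl fun i _ => by ring
    have hR : ∑ i, ks i * (minScore (tv i) 0 + 2 * minScore (tv i) 2 + 6) =
        S 0 + 2 * S 2 + 12 * K := by
      have h6 : 12 * K = 6 * ∑ i, ks i := by rw [hsum]; ring
      rw [h6, hS, Finset.mul_sum, Finset.mul_sum, ← Finset.sum_add_distrib,
        ← Finset.sum_add_distrib]
      exact Finset.sum_congr rfl fun i _ => by ring
    have hle := Finset.sum_le_sum hpt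
    rw [hL, hR] at hle
    change _ + 4 * S 0 ≤ _ + 4 * S 1 at ha
    change _ + 4 * S 2 ≤ _ + 4 * S 1 at hb
    have heq := (Finset.sum_eq_sum_iff_of_le hpt).1 (by rw [hL, hR]; omega)
    refine ⟨Finset.univ.filter fun i => minScore (tv i) 1 = minScore (tv i) 2 + 2, ?_⟩
    have hsplit : S 1 = S 2 + 2 * K +
        ∑ i ∈ Finset.univ.filter (fun i => minScore (tv i) 1 = minScore (tv i) 2 + 2), ks i := by
      rw [← hsum, Finset.sum_filter, hS, ← Finset.sum_add_distrib, ← Finset.sum_add_distrib]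
      refine Finset.sum_congr rfl fun i hi => ?_
      have hi' := Nat.eq_of_mul_eq_mul_left (hks i) (heq i hi)
      rcases (minScore_of_singlePeaked (htv i).1 (htv i).2).2 hi' with h | h
      · simp [h]; ring
      · simp [h]; ring
    omega
  · rintro ⟨I, hI⟩
    refine ⟨fun i => if i ∈ I then voteTied else voteStrict, fun i => ?_, fun d => ?_⟩
    · by_cases hi : i ∈ I
      · simpa only [hi, if_true] using ⟨isWeakOrder_rank _, isSinglePeaked_voteTied⟩
      · simpa only [hi, if_false] using ⟨isWeakOrder_rank _, isSinglePeaked_voteStrict⟩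
    · have hIc : ∑ i ∈ Iᶜ, ks i = K := by
        have := Finset.sum_add_sum_compl I ks
        omega
      have hscore : ∀ c, ∑ i, ks i * minScore (if i ∈ I then voteTied else voteStrict) c =
          K * ![2, 4, 2, 0, 0] c + K * ![0, 4, 3, 2, 0] c := fun c => by
        rw [← Finset.sum_add_sum_compl I]
        nth_rewrite 1 [← hI]
        rw [← hIc, Finset.sum_mul, Finset.sum_mul]
        congr 1
        · exact Finset.sum_congr rfl fun i hi => by rw [if_pos hi, minScore_voteTied]
        · exact Finset.sum_congr rfl fun i hi => by
            rw [if_neg (Finset.mem_compl.1 hi), minScore_voteStrict]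
      rw [hscore, hscore]
      fin_cases d <;> simp <;> omega
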